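/- arXiv:2112.02843 — 2 statements merged into one kernel-verified Lean document; each statement's English description precedes it below -/
import Mathlib

section
/- The determinant of the DMV updated covariance satisfies the upper bound det P⁺(ω) ≤ (det P / ωⁿ) / ( 1 + ((1-ω)/ω) · trace( S(ω)⁻¹ H_i P H_iᵀ ) ). -/
open Matrix

theorem aux_prod {ι : Type*} (s : Finset ι) (f : ι → ℝ) (hf : ∀ i, 0 ≤ f i) :
    1 + ∑ i ∈ s, f i ≤ ∏ i ∈ s, (1 + f i) := by
  classical
  induction s using Finset.induction_on with
  | empty => simp
  | insert a s ha ih =>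
    rw [Finset.sum_insert ha, Finset.prod_insert ha]
    have h1 := hf a
    have h2 : 0 ≤ ∑ i ∈ s, f i := Finset.sum_nonneg fun i _ => hf i
    nlinarith [mul_nonneg h1 h2]

theorem aux_det {n : ℕ} (A : Matrix (Fin n) (Fin n) ℝ) (hA : A.PosSemidef) :
    1 + A.trace ≤ (1 + A).det := by
  have h1 : A.trace = ∑ i, hA.1.eigenvalues i := by
    simpa using hA.1.trace_eq_sum_eigenvalues
  have h2 : (1 + A).det = ∏ i, (1 + hA.1.eigenvalues i) := by
    have h := congrArg (Polynomial.eval (-1)) hA.1.charpoly_eq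
    rw [Matrix.eval_charpoly, Polynomial.eval_prod] at h
    have e : (Matrix.scalar (Fin n)) (-1 : ℝ) - A = -(1 + A) := by
      rw [map_neg, map_one]; abel
    rw [e, Matrix.det_neg] at h
    have e2 : ∏ i, Polynomial.eval (-1 : ℝ) (Polynomial.X - Polynomial.C ((hA.1.eigenvalues i : ℝ)))
        = (-1) ^ n * ∏ i, (1 + hA.1.eigenvalues i) := by
      have : ∀ i, Polynomial.eval (-1 : ℝ) (Polynomial.X - Polynomial.C ((hA.1.eigenvalues i : ℝ)))
        = (-1) * (1 + hA.1.eigenvalues i) := by intro i; simp; ring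
      simp_rw [this, Finset.prod_mul_distrib]; simp
    have h' := h.trans e2
    rw [Fintype.card_fin] at h'
    exact mul_left_cancel₀ (pow_ne_zero _ (by norm_num)) h'
  rw [h1, h2]
  exact aux_prod _ _ hA.eigenvalues_nonneg

theorem aux_main {n : ℕ} (ω : ℝ) (hω : ω ∈ Set.Ioo (0 : ℝ) 1)
    (P G : Matrix (Fin n) (Fin n) ℝ) (hP : P.PosDef) (hG : G.PosSemidef) :
    ((ω • P⁻¹ + (1 - ω) • G)⁻¹).det ≤ (P.det / ω ^ n) / (1 + ((1 - ω) / ω) * (G * P).trace) := by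
  obtain ⟨h0, h1⟩ := hω
  have hc : 0 ≤ (1 - ω) / ω := div_nonneg (by linarith) h0.le
  obtain ⟨B, hB⟩ : ∃ B : Matrix (Fin n) (Fin n) ℝ, P = Bᴴ * B := by
    open scoped MatrixOrder in
    exact CStarAlgebra.nonneg_iff_eq_star_mul_self.mp hP.posSemidef.nonneg
  have hA : (((1 - ω) / ω) • (B * G * Bᴴ)).PosSemidef :=
    (hG.mul_mul_conjTranspose_same B).smul hc
  have key := aux_det _ hA
  have ht : (G * P).trace = (B * G * Bᴴ).trace := by
    rw [hB, ← Matrix.mul_assoc, Matrix.trace_mul_comm, ← Matrix.mul_assoc]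
  have hd : (ω • P⁻¹ + (1 - ω) • G).det * P.det
      = ω ^ n * (1 + ((1 - ω) / ω) • (B * G * Bᴴ)).det := by
    have e1 : (ω • P⁻¹ + (1 - ω) • G) * P = ω • (1 + (((1 - ω) / ω) • (G * Bᴴ)) * B) := by
      rw [Matrix.add_mul, Matrix.smul_mul, Matrix.nonsing_inv_mul _ hP.det_pos.ne'.isUnit,
        smul_add, Matrix.smul_mul, Matrix.smul_mul, smul_smul, mul_div_cancel₀ _ h0.ne',
        Matrix.mul_assoc, ← hB]
    rw [← Matrix.det_mul, e1, Matrix.det_smul, Fintype.card_fin, Matrix.det_one_add_mul_comm,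
      Matrix.mul_smul, Matrix.mul_assoc]
  rw [Matrix.trace_smul, smul_eq_mul, ← ht] at key
  have htr : 0 ≤ (G * P).trace := by
    rw [ht]; exact (hG.mul_mul_conjTranspose_same B).trace_nonneg
  have hpos : 0 < 1 + ((1 - ω) / ω) * (G * P).trace := by positivity
  have hPd := hP.det_pos
  have hw : 0 < ω ^ n := by positivity
  set d := (1 + ((1 - ω) / ω) • (B * G * Bᴴ)).det
  have hM : (ω • P⁻¹ + (1 - ω) • G).det = ω ^ n * d / P.det := by
    rw [← hd]; field_simp
  rw [Matrix.det_nonsing_inv, Ring.inverse_eq_inv', hM, inv_div, div_div]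
  gcongr

/-- The determinant of the DMV updated covariance satisfies the upper bound
`det P⁺(ω) ≤ (det P / ωⁿ) / (1 + ((1-ω)/ω) · trace(S(ω)⁻¹ H_i P H_iᵀ))`. -/
theorem dmv_updated_covariance_det_upper_bound
    (n p m : ℕ) (hn : 0 < n) (hp : 0 < p) (hm : 0 < m)
    (ω : ℝ) (hω : ω ∈ Set.Ioo (0 : ℝ) 1)
    (P : Matrix (Fin n) (Fin n) ℝ) (hP : P.PosDef)
    (Pj : Matrix (Fin p) (Fin p) ℝ) (hPj : Pj.PosSemidef)
    (R : Matrix (Fin m) (Fin m) ℝ) (hR : R.PosDef)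
    (Hi : Matrix (Fin m) (Fin n) ℝ) (Hj : Matrix (Fin m) (Fin p) ℝ)
    (S : Matrix (Fin m) (Fin m) ℝ) (hS : S = Hj * Pj * Hjᵀ + (1 - ω) • R)
    (Pplus : Matrix (Fin n) (Fin n) ℝ)
    (hPplus : Pplus = (ω • P⁻¹ + (1 - ω) • (Hiᵀ * S⁻¹ * Hi))⁻¹) :
    Pplus.det ≤
      (P.det / ω ^ n) / (1 + ((1 - ω) / ω) * (S⁻¹ * Hi * P * Hiᵀ).trace) := by
  have hS' : S.PosDef := by
    rw [hS]
    have a := hPj.mul_mul_conjTranspose_same Hj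
    rw [Matrix.conjTranspose_eq_transpose_of_trivial] at a
    exact Matrix.PosDef.posSemidef_add a (hR.smul (by linarith [hω.2]))
  have hG : (Hiᵀ * S⁻¹ * Hi).PosSemidef := by
    have a := hS'.inv.posSemidef.conjTranspose_mul_mul_same Hi
    rwa [Matrix.conjTranspose_eq_transpose_of_trivial] at a
  have ht : (S⁻¹ * Hi * P * Hiᵀ).trace = (Hiᵀ * S⁻¹ * Hi * P).trace := by
    rw [Matrix.trace_mul_comm]; simp only [Matrix.mul_assoc]
  rw [hPplus, ht]
  exact aux_main ω hω P _ hP hG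
end

section
/- The DMV update with the determinant-optimal weight does not increase the determinant of the error covariance: the infimum over ω ∈ (0,1) of det P⁺(ω) is at most det P. -/
open Matrix

lemma aux_one_le_det {k : ℕ} (M : Matrix (Fin k) (Fin k) ℝ) (hM : M.PosSemidef) :
    1 ≤ (1 + M).det := by
  have hN : (1 + M).IsHermitian := Matrix.isHermitian_one.add hM.isHermitian
  rw [hN.det_eq_prod_eigenvalues]
  refine (Finset.prod_const_one (s := Finset.univ)).symm.le.trans
    (Finset.prod_le_prod (fun _ _ => zero_le_one) ?_)
  intro i _
  have h := hN.eigenvalues_eq i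
  have h1 := hM.dotProduct_mulVec_nonneg (⇑(hN.eigenvectorBasis i))
  have h2 : star (⇑(hN.eigenvectorBasis i)) ⬝ᵥ ⇑(hN.eigenvectorBasis i) = (1 : ℝ) := by
    have h3 := hN.eigenvectorBasis.orthonormal.1 i
    have h4 := real_inner_self_eq_norm_sq (hN.eigenvectorBasis i)
    rw [h3, EuclideanSpace.inner_eq_star_dotProduct, dotProduct_comm] at h4
    simpa using h4
  rw [add_mulVec, one_mulVec, dotProduct_add, h2] at h
  simp only [RCLike.re_to_real] at h
  simp only [RCLike.ofReal_real_eq_id, id]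
  linarith

open scoped MatrixOrder in
lemma aux_factor {k : ℕ} (B : Matrix (Fin k) (Fin k) ℝ) (hB : B.PosSemidef) :
    ∃ C : Matrix (Fin k) (Fin k) ℝ, B = Cᴴ * C :=
  CStarAlgebra.nonneg_iff_eq_star_mul_self.mp hB.nonneg

lemma aux_det_le {k : ℕ} (A B : Matrix (Fin k) (Fin k) ℝ) (hA : A.PosDef) (hB : B.PosSemidef) :
    A.det ≤ (A + B).det := by
  obtain ⟨C, rfl⟩ := aux_factor B hB
  have h : A + Cᴴ * C = A * (1 + A⁻¹ * Cᴴ * C) := by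
    rw [mul_add, mul_one, Matrix.mul_assoc, Matrix.mul_nonsing_inv_cancel_left _ _
      ((Matrix.isUnit_iff_isUnit_det _).1 hA.isUnit)]
  rw [h, det_mul, det_one_add_mul_comm, ← Matrix.mul_assoc]
  have := aux_one_le_det _ (hA.inv.posSemidef.mul_mul_conjTranspose_same C)
  exact le_mul_of_one_le_right hA.det_pos.le this

/-- The DMV update with the determinant-optimal weight does not increase the
determinant of the error covariance: the infimum over `ω ∈ (0,1)` of `det P⁺(ω)` is at
most `det P`. -/
theorem dmv_inf_det_updated_covariance_le
    (n p m : ℕ) (hn : 0 < n) (hp : 0 < p) (hm : 0 < m)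
    (P : Matrix (Fin n) (Fin n) ℝ) (hP : P.PosDef)
    (Pj : Matrix (Fin p) (Fin p) ℝ) (hPj : Pj.PosSemidef)
    (R : Matrix (Fin m) (Fin m) ℝ) (hR : R.PosDef)
    (Hi : Matrix (Fin m) (Fin n) ℝ) (Hj : Matrix (Fin m) (Fin p) ℝ) :
    sInf ((fun ω : ℝ =>
        ((ω • P⁻¹ + (1 - ω) •
            (Hiᵀ * (Hj * Pj * Hjᵀ + (1 - ω) • R)⁻¹ * Hi))⁻¹).det)
      '' Set.Ioo (0 : ℝ) 1) ≤ P.det := by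
  have key : ∀ ω ∈ Set.Ioo (0 : ℝ) 1, 
      (ω • P⁻¹).PosDef ∧ ((1 - ω) •
            (Hiᵀ * (Hj * Pj * Hjᵀ + (1 - ω) • R)⁻¹ * Hi)).PosSemidef := by
    intro ω hω
    have h1 : 0 < 1 - ω := by linarith [hω.2]
    refine ⟨hP.inv.smul hω.1, PosSemidef.smul ?_ h1.le⟩
    have hS : (Hj * Pj * Hjᵀ + (1 - ω) • R).PosDef :=
      PosDef.posSemidef_add (by simpa using hPj.mul_mul_conjTranspose_same Hj) (hR.smul h1)
    simpa using hS.inv.posSemidef.conjTranspose_mul_mul_same Hi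
  have hbd : BddBelow ((fun ω : ℝ =>
        ((ω • P⁻¹ + (1 - ω) •
            (Hiᵀ * (Hj * Pj * Hjᵀ + (1 - ω) • R)⁻¹ * Hi))⁻¹).det)
      '' Set.Ioo (0 : ℝ) 1) := by
    refine ⟨0, ?_⟩
    rintro _ ⟨ω, hω, rfl⟩
    exact ((key ω hω).1.add_posSemidef (key ω hω).2).inv.det_pos.le
  have hle : ∀ ω ∈ Set.Ioo (0 : ℝ) 1, sInf ((fun ω : ℝ =>
        ((ω • P⁻¹ + (1 - ω) •
            (Hiᵀ * (Hj * Pj * Hjᵀ + (1 - ω) • R)⁻¹ * Hi))⁻¹).det)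
      '' Set.Ioo (0 : ℝ) 1) * ω ^ n ≤ P.det := by
    intro ω hω
    have hpos : 0 < ω ^ n := pow_pos hω.1 n
    rw [← le_div_iff₀ hpos]
    refine (csInf_le hbd (Set.mem_image_of_mem _ hω)).trans ?_
    have h := aux_det_le _ _ (key ω hω).1 (key ω hω).2
    have h0 := (key ω hω).1.det_pos
    simp only [det_nonsing_inv, Ring.inverse_eq_inv']
    refine (inv_anti₀ h0 h).trans (le_of_eq ?_)
    simp only [det_smul, det_nonsing_inv, Ring.inverse_eq_inv', Fintype.card_fin]
    rw [mul_inv, inv_inv, div_eq_inv_mul]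
  generalize sInf (_ : Set ℝ) = s at hle ⊢
  have ht : Filter.Tendsto (fun ω : ℝ => s * ω ^ n) (nhdsWithin 1 (Set.Iio 1)) (nhds s) := by
    have : Continuous (fun ω : ℝ => s * ω ^ n) := by fun_prop
    simpa using (this.tendsto 1).mono_left nhdsWithin_le_nhds
  refine le_of_tendsto ht ?_
  filter_upwards [Ioo_mem_nhdsLT (zero_lt_one' ℝ)] with ω hω
  exact hle ω hω
end
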